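/- For the weighted two-dimensional step set S = {(0,1), (1,-1), (-1,-1)} in which the step (0,1) carries weight 2 and the steps (1,-1), (-1,-1) carry weight 1, the total weight s_n of walks of length n taking steps in S, starting at the origin, and remaining in ℕ^2 satisfies s_n = (4^n / n) · ( 2√2/π + n^{-1/2}/√π + O(1/n) ) as n → ∞. In particular s_n ∼ (2√2/π) · 4^n / n. -/

import Mathlib

open Finset Filter
open scoped Classical Real

noncomputable section

/-- The number of walks of length `n` with steps in `S`, starting at the origin and
never leaving `ℕ^d` (all partial sums have nonnegative coordinates). -/
def numWalks (d : ℕ) (S : Finset (Fin d → ℤ)) (n : ℕ) : ℕ :=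
  Finset.card (Finset.univ.filter fun f : Fin n → {i // i ∈ S} =>
    ∀ m : ℕ, m ≤ n → ∀ j : Fin d,
      0 ≤ ∑ k ∈ Finset.univ.filter (fun k : Fin n => (k : ℕ) < m), ((f k : Fin d → ℤ) j))

/-- Total weight of walks of length `n` with steps in `S` (weighted by `w`),
starting at the origin and never leaving `ℕ^d`. -/
def walkWeight (d : ℕ) (S : Finset (Fin d → ℤ)) (w : (Fin d → ℤ) → ℝ) (n : ℕ) : ℝ :=
  ∑ f : Fin n → {i // i ∈ S},
    if ∀ m : ℕ, m ≤ n → ∀ j : Fin d,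
        0 ≤ ∑ k ∈ Finset.univ.filter (fun k : Fin n => (k : ℕ) < m), ((f k : Fin d → ℤ) j)
    then ∏ k : Fin n, w (f k) else 0

def bal (n : ℕ) : ℕ → ℝ
  | 0 => 1
  | k + 1 => (n.choose (k + 1) : ℝ) - n.choose k

def bb (n k : ℕ) : ℝ := if 2 * k ≤ n then bal n k else 0

lemma bal_rec (n k : ℕ) : bal (n + 1) (k + 1) = bal n (k + 1) + bal n k := by
  cases k with
  | zero => simp [bal]
  | succ k =>
    simp only [bal, Nat.choose_succ_succ']
    push_cast
    ring

lemma bal_zero (n k : ℕ) (h : 2 * (k + 1) = n + 1) : bal n (k + 1) = 0 := by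
  have : n = 2 * k + 1 := by omega
  subst this
  simp only [bal, sub_eq_zero, Nat.cast_inj]
  exact Nat.choose_symm_half k

lemma bb_rec (n k : ℕ) : bb (n + 1) (k + 1) =
    if 2 * (k + 1) ≤ n + 1 then bb n (k + 1) + bb n k else 0 := by
  unfold bb
  by_cases h : 2 * (k + 1) ≤ n + 1
  · have h1 : 2 * k ≤ n := by omega
    simp only [h, h1, if_true]
    rw [bal_rec]
    by_cases h2 : 2 * (k + 1) ≤ n
    · simp [h2]
    · have : bal n (k + 1) = 0 := bal_zero n k (by omega)
      simp [h2, this]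
  · simp [h]

lemma bb_zero (n : ℕ) : bb n 0 = 1 := by simp [bb, bal]

lemma bb_step (n : ℕ) (ψ : ℕ → ℝ) :
    ∑ k ∈ range (n + 1), bb n k * ((if 2 * k ≤ n + 1 then ψ k else 0) +
      (if 2 * (k + 1) ≤ n + 1 then ψ (k + 1) else 0)) =
    ∑ k ∈ range (n + 2), bb (n + 1) k * ψ k := by
  rw [sum_range_succ' _ (n + 1)]
  simp only [mul_add, sum_add_distrib]
  have h0 : ∑ k ∈ range (n + 1), bb n k * (if 2 * k ≤ n + 1 then ψ k else 0) =
      ∑ k ∈ range (n + 2), bb n k * (if 2 * k ≤ n + 1 then ψ k else 0) := by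
    rw [sum_range_succ _ (n + 1)]
    simp [bb, show ¬ (2 * (n + 1) ≤ n) by omega]
  rw [h0, sum_range_succ' _ (n + 1)]
  have : ∀ k, bb (n + 1) (k + 1) * ψ (k + 1) =
      bb n (k + 1) * (if 2 * (k + 1) ≤ n + 1 then ψ (k + 1) else 0) +
      bb n k * (if 2 * (k + 1) ≤ n + 1 then ψ (k + 1) else 0) := by
    intro k
    rw [bb_rec]
    split_ifs <;> ring
  simp only [this, sum_add_distrib, bb_zero]
  rw [if_pos (by omega)]
  ring

abbrev SS : Finset (Fin 2 → ℤ) := {![0, 1], ![1, -1], ![-1, -1]}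
abbrev ww : (Fin 2 → ℤ) → ℝ := fun i => if i = ![0, 1] then 2 else 1

def good (n : ℕ) (f : Fin n → {i // i ∈ SS}) : Prop :=
  ∀ m : ℕ, m ≤ n → ∀ j : Fin 2,
      0 ≤ ∑ k ∈ Finset.univ.filter (fun k : Fin n => (k : ℕ) < m), ((f k : Fin 2 → ℤ) j)

def GG (n : ℕ) (φ : ℤ → ℤ → ℝ) : ℝ :=
  ∑ f : Fin n → {i // i ∈ SS}, if good n f then (∏ k : Fin n, ww (f k)) *
    φ (∑ k, (f k : Fin 2 → ℤ) 0) (∑ k, (f k : Fin 2 → ℤ) 1) else 0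

lemma good_snoc (n : ℕ) (f : Fin n → {i // i ∈ SS}) (s : {i // i ∈ SS}) :
    good (n + 1) (Fin.snoc (α := fun _ => {i // i ∈ SS}) f s) ↔ good n f ∧
      ∀ j : Fin 2, 0 ≤ (∑ k, (f k : Fin 2 → ℤ) j) + (s : Fin 2 → ℤ) j := by
  have key : ∀ m j, m ≤ n → ∑ k ∈ Finset.univ.filter (fun k : Fin (n+1) => (k : ℕ) < m),
      (((Fin.snoc (α := fun _ => {i // i ∈ SS}) f s : Fin (n+1) → {i // i ∈ SS}) k : Fin 2 → ℤ) j)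
      = ∑ k ∈ Finset.univ.filter (fun k : Fin n => (k : ℕ) < m), ((f k : Fin 2 → ℤ) j) := by
    intro m j hm
    rw [sum_filter, sum_filter, Fin.sum_univ_castSucc]
    simp [hm]
  have key2 : ∀ j, ∑ k ∈ Finset.univ.filter (fun k : Fin (n+1) => (k : ℕ) < n + 1),
      (((Fin.snoc (α := fun _ => {i // i ∈ SS}) f s : Fin (n+1) → {i // i ∈ SS}) k : Fin 2 → ℤ) j)
      = (∑ k, (f k : Fin 2 → ℤ) j) + (s : Fin 2 → ℤ) j := by
    intro j
    rw [sum_filter, Fin.sum_univ_castSucc]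
    have : ∀ i : Fin n, (i : ℕ) < n + 1 := fun i => by omega
    simp [this]
  unfold good
  constructor
  · intro h
    refine ⟨fun m hm j => ?_, fun j => ?_⟩
    · rw [← key m j hm]; exact h m (by omega) j
    · rw [← key2 j]; exact h (n + 1) le_rfl j
  · rintro ⟨h1, h2⟩ m hm j
    rcases Nat.lt_or_ge n m with h | h
    · obtain rfl : m = n + 1 := by omega
      rw [key2]; exact h2 j
    · rw [key m j h]; exact h1 m h j

lemma sum_SS (h : {i // i ∈ SS} → ℝ) (g : (Fin 2 → ℤ) → ℝ) (hg : ∀ s, h s = g s) :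
    ∑ s, h s = g ![0, 1] + g ![1, -1] + g ![-1, -1] := by
  simp only [hg]
  rw [Finset.sum_coe_sort SS g, sum_insert (by decide), sum_insert (by decide), sum_singleton]
  ring

lemma GG_succ (n : ℕ) (φ : ℤ → ℤ → ℝ) : GG (n + 1) φ = GG n (fun x y =>
    2 * (if 0 ≤ x ∧ 0 ≤ y + 1 then φ x (y + 1) else 0) +
    (if 0 ≤ x + 1 ∧ 0 ≤ y - 1 then φ (x + 1) (y - 1) else 0) +
    (if 0 ≤ x - 1 ∧ 0 ≤ y - 1 then φ (x - 1) (y - 1) else 0)) := by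
  unfold GG
  rw [← (Fin.snocEquiv (fun _ : Fin (n + 1) => {i // i ∈ SS})).sum_comp, Fintype.sum_prod_type,
    sum_comm]
  refine sum_congr rfl fun f _ => ?_
  have hc : ∀ s, (Fin.snocEquiv (fun _ : Fin (n + 1) => {i // i ∈ SS})) (s, f) =
    Fin.snoc (α := fun _ => {i // i ∈ SS}) f s := fun s => rfl
  simp only [hc, good_snoc]
  by_cases hf : good n f
  swap
  · simp [hf]
  simp only [hf, true_and, if_true]
  rw [sum_SS _ (fun s => if ∀ j : Fin 2, 0 ≤ (∑ k, (f k : Fin 2 → ℤ) j) + s j then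
    (∏ k : Fin n, ww (f k)) * ww s * φ ((∑ k, (f k : Fin 2 → ℤ) 0) + s 0)
      ((∑ k, (f k : Fin 2 → ℤ) 1) + s 1) else 0)]
  · simp only [Fin.forall_fin_two]
    have e1 : (![1, -1] : Fin 2 → ℤ) ≠ ![0, 1] := by decide
    have e2 : (![-1, -1] : Fin 2 → ℤ) ≠ ![0, 1] := by decide
    simp only [ww, e1, e2, if_true, if_false, Matrix.cons_val_zero, Matrix.cons_val_one, add_zero,
      ← sub_eq_add_neg]
    split_ifs <;> ring
  · intro s
    rw [Fin.prod_univ_castSucc, Fin.sum_univ_castSucc, Fin.sum_univ_castSucc]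
    simp only [Fin.snoc_castSucc, Fin.snoc_last]

lemma GG_eq (n : ℕ) : ∀ φ : ℤ → ℤ → ℝ, GG n φ = ∑ k ∈ range (n + 1), bb n k *
    (2 ^ (n - k) * ∑ i ∈ range (k + 1), bb k i * φ ((k : ℤ) - 2 * i) ((n : ℤ) - 2 * k)) := by
  induction n with
  | zero =>
    intro φ
    have : good 0 (fun k => k.elim0) := by intro m hm j; simp
    have h2 : ∀ f, good 0 f := by intro f m hm j; simp
    simp [GG, bb_zero, h2]
  | succ n ih =>
    intro φ
    rw [GG_succ, ih, ← bb_step n (fun k => 2 ^ (n + 1 - k) * ∑ i ∈ range (k + 1), bb k i *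
      φ ((k : ℤ) - 2 * i) (((n + 1 : ℕ) : ℤ) - 2 * k))]
    refine sum_congr rfl fun k hk => ?_
    have hk' : k ≤ n := by simp at hk; omega
    congr 1
    rw [← bb_step k (fun i => φ (((k + 1 : ℕ) : ℤ) - 2 * i)
      (((n + 1 : ℕ) : ℤ) - 2 * ((k + 1 : ℕ) : ℤ)))]
    have e1 : n + 1 - k = (n - k) + 1 := by omega
    have e2 : n + 1 - (k + 1) = n - k := by omega
    rw [e1, e2, pow_succ]
    have : ∀ (p q : Prop) [Decidable p] [Decidable q] (A B z : ℝ), (if p then z * 2 * A else 0) +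
        (if q then z * B else 0) = z * (2 * (if p then A else 0) + if q then B else 0) := by
      intro p q _ _ A B z; split_ifs <;> ring
    rw [this]
    congr 1
    have h3 : ∀ (p : Prop) [Decidable p] (g : ℕ → ℝ), (if p then ∑ i ∈ range (k + 1), g i else 0) =
        ∑ i ∈ range (k + 1), if p then g i else 0 := by
      intro p _ g; split_ifs <;> simp
    rw [h3, h3, mul_sum, ← sum_add_distrib]
    refine sum_congr rfl fun i _ => ?_
    by_cases hi : 2 * i ≤ k
    swap
    · simp [bb, hi]
    have c1 : (0 ≤ (k : ℤ) - 2 * i ∧ 0 ≤ (n : ℤ) - 2 * k + 1) ↔ 2 * k ≤ n + 1 := by omega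
    have c2 : (0 ≤ (k : ℤ) - 2 * i + 1 ∧ 0 ≤ (n : ℤ) - 2 * k - 1) ↔
      (2 * (k + 1) ≤ n + 1 ∧ 2 * i ≤ k + 1) := by omega
    have c3 : (0 ≤ (k : ℤ) - 2 * i - 1 ∧ 0 ≤ (n : ℤ) - 2 * k - 1) ↔
      (2 * (k + 1) ≤ n + 1 ∧ 2 * (i + 1) ≤ k + 1) := by omega
    simp only [c1, c2, c3]
    have d1 : ((n + 1 : ℕ) : ℤ) - 2 * k = (n : ℤ) - 2 * k + 1 := by push_cast; ring
    have d2 : ((n + 1 : ℕ) : ℤ) - 2 * ((k + 1 : ℕ) : ℤ) = (n : ℤ) - 2 * k - 1 := by push_cast; ring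
    have d3 : ((k + 1 : ℕ) : ℤ) - 2 * i = (k : ℤ) - 2 * i + 1 := by push_cast; ring
    have d4 : ((k + 1 : ℕ) : ℤ) - 2 * ((i + 1 : ℕ) : ℤ) = (k : ℤ) - 2 * i - 1 := by push_cast; ring
    rw [d1, d2, d3, d4]
    split_ifs <;> first | (exfalso; omega) | ring

lemma bal_sum (n N : ℕ) : ∑ i ∈ range (N + 1), bal n i = n.choose N := by
  induction N with
  | zero => simp [bal]
  | succ N ih => rw [sum_range_succ, ih]; simp [bal]

lemma bb_sum (n : ℕ) (g : ℕ → ℝ) :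
    ∑ i ∈ range (n + 1), bb n i * g i = ∑ i ∈ range (n / 2 + 1), bal n i * g i := by
  symm
  have : ∀ i ∈ range (n / 2 + 1), bal n i * g i = bb n i * g i := by
    intro i hi
    have : 2 * i ≤ n := by simp at hi; omega
    simp [bb, this]
  rw [sum_congr rfl this]
  apply sum_subset
  · intro i; simp; omega
  · intro i _ hi
    have : ¬ 2 * i ≤ n := by simp at hi; omega
    simp [bb, this]

def aa (k : ℕ) : ℝ := (k.choose (k / 2) : ℝ) / 2 ^ k

lemma abel (n N : ℕ) (g : ℕ → ℝ) : ∑ k ∈ range (N + 1), bal n k * g k =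
    g N * n.choose N + ∑ k ∈ range N, (g k - g (k + 1)) * n.choose k := by
  induction N with
  | zero => simp [bal]
  | succ N ih => rw [sum_range_succ, ih, sum_range_succ]; simp only [bal]; ring

lemma walk_eq (n : ℕ) : walkWeight 2 SS ww n = 4 ^ n * (aa (n / 2) * aa n +
    ∑ k ∈ range (n / 2), (aa k - aa (k + 1)) * (n.choose k / 2 ^ n)) := by
  have h : walkWeight 2 SS ww n = GG n (fun _ _ => 1) := by
    simp only [walkWeight, GG, good, mul_one]
  have h1 : ∀ k, ∑ i ∈ range (k + 1), bb k i * (1 : ℝ) = aa k * 2 ^ k := by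
    intro k
    rw [bb_sum]
    simp only [mul_one, bal_sum, aa]
    field_simp
  rw [h, GG_eq]
  simp only [h1]
  have h2 : ∑ k ∈ range (n + 1), bb n k * (2 ^ (n - k) * (aa k * 2 ^ k)) =
      ∑ k ∈ range (n + 1), bb n k * (2 ^ n * aa k) := by
    refine sum_congr rfl fun k hk => ?_
    have : n = (n - k) + k := by simp at hk; omega
    have e : (2:ℝ) ^ n = 2 ^ (n - k) * 2 ^ k := by rw [← pow_add, ← this]
    rw [e]; ring
  rw [h2, bb_sum, abel]
  have h4 : (4:ℝ) ^ n = 2 ^ n * 2 ^ n := by rw [← mul_pow]; norm_num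
  rw [h4, mul_add, mul_sum]
  congr 1
  · simp only [aa]; field_simp
  · refine sum_congr rfl fun k _ => ?_
    field_simp

lemma aa_even (m : ℕ) : aa (2 * m) = (m.centralBinom : ℝ) / 4 ^ m := by
  simp only [aa, Nat.centralBinom]
  rw [pow_mul]
  norm_num

lemma aa_odd (m : ℕ) : aa (2 * m + 1) = ((m + 1).centralBinom : ℝ) / 4 ^ (m + 1) := by
  have h1 : (2 * m + 1) / 2 = m := by omega
  have h2 : (m + 1).centralBinom = 2 * (2 * m + 1).choose m := by
    rw [Nat.centralBinom, show 2 * (m + 1) = 2 * m + 1 + 1 by ring, Nat.choose_succ_succ',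
      Nat.choose_symm_half]; ring
  simp only [aa, h1, h2]
  rw [pow_succ (2 : ℝ) (2 * m), pow_mul, pow_succ (4 : ℝ) m, show (2 : ℝ) ^ 2 = 4 by norm_num]
  push_cast
  field_simp
  norm_num

lemma wallis_cb (m : ℕ) : ((m.centralBinom : ℝ) / 4 ^ m) ^ 2 * (Real.Wallis.W m * (2 * m + 1)) = 1 := by
  have h := Nat.choose_mul_factorial_mul_factorial (show m ≤ 2 * m by omega)
  rw [show 2 * m - m = m by omega] at h
  have h' : (m.centralBinom : ℝ) * m.factorial * m.factorial = (2 * m).factorial := by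
    rw [Nat.centralBinom]; exact_mod_cast h
  have hm : (m.factorial : ℝ) ≠ 0 := by positivity
  have hm2 : (m.centralBinom : ℝ) ≠ 0 := by exact_mod_cast Nat.centralBinom_ne_zero m
  rw [Real.Wallis.W_eq_factorial_ratio, ← h']
  have : (2 : ℝ) ^ (4 * m) = 4 ^ m * 4 ^ m := by
    rw [pow_mul, ← mul_pow]; norm_num
  rw [this]
  field_simp

lemma cb_bounds (m : ℕ) : 2 ≤ π * (2 * m + 1) * ((m.centralBinom : ℝ) / 4 ^ m) ^ 2 ∧
    π * (2 * m) * ((m.centralBinom : ℝ) / 4 ^ m) ^ 2 ≤ 2 := by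
  have h := wallis_cb m
  have h1 := Real.Wallis.W_le m
  have h2 := Real.Wallis.le_W m
  have hW := Real.Wallis.W_pos m
  set c := ((m.centralBinom : ℝ) / 4 ^ m) ^ 2
  have hc : 0 ≤ c := by positivity
  have hm : (0 : ℝ) ≤ m := by positivity
  constructor
  · have : c * (Real.Wallis.W m * (2 * m + 1)) ≤ c * (π / 2 * (2 * m + 1)) := by gcongr
    linarith
  · have : c * (((2 : ℝ) * m + 1) / (2 * m + 2) * (π / 2) * (2 * m + 1)) ≤ 1 := by
      refine le_trans ?_ h.le
      rw [mul_comm (Real.Wallis.W m)] at *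
      rw [mul_comm _ ((2 : ℝ) * m + 1)]
      gcongr
    have h3 : (m : ℝ) ≤ ((2 : ℝ) * m + 1) / (2 * m + 2) * (1 / 2) * (2 * m + 1) := by
      rw [div_mul_div_comm, div_mul_eq_mul_div, le_div_iff₀ (by positivity)]
      nlinarith
    have h4 : c * π * m ≤ c * π * (((2 : ℝ) * m + 1) / (2 * m + 2) * (1 / 2) * (2 * m + 1)) := by
      have := Real.pi_pos
      gcongr
    nlinarith

lemma aa_nonneg (k : ℕ) : 0 ≤ aa k := by unfold aa; positivity

lemma aa_le_one (k : ℕ) : aa k ≤ 1 := by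
  unfold aa
  rw [div_le_one (by positivity)]
  exact_mod_cast Nat.choose_le_two_pow k (k / 2)

lemma aa_bounds (k : ℕ) : 2 ≤ π * (k + 2) * aa k ^ 2 ∧ π * k * aa k ^ 2 ≤ 2 := by
  have hp := Real.pi_pos
  rcases Nat.even_or_odd' k with ⟨m, rfl | rfl⟩
  · rw [aa_even]
    obtain ⟨h1, h2⟩ := cb_bounds m
    set c := ((m.centralBinom : ℝ) / 4 ^ m) ^ 2
    have hc : 0 ≤ π * c := by positivity
    push_cast
    constructor <;> nlinarith
  · rw [aa_odd]
    obtain ⟨h1, h2⟩ := cb_bounds (m + 1)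
    set c := (((m + 1).centralBinom : ℝ) / 4 ^ (m + 1)) ^ 2
    have hc : 0 ≤ π * c := by positivity
    push_cast at *
    constructor <;> nlinarith

lemma aa_diff (k : ℕ) : aa k - aa (k + 1) = aa k / (k + 2) * ((1 + (-1) ^ k) / 2) := by
  rcases Nat.even_or_odd' k with ⟨m, rfl | rfl⟩
  · rw [aa_even, aa_odd]
    have h := Nat.succ_mul_centralBinom_succ m
    have h' : ((m : ℝ) + 1) * (m + 1).centralBinom = 2 * (2 * m + 1) * m.centralBinom := by
      exact_mod_cast h
    have h2 : ((m + 1).centralBinom : ℝ) = 2 * (2 * m + 1) * m.centralBinom / (m + 1) := by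
      field_simp; linarith
    rw [h2, pow_mul, pow_succ]
    push_cast
    norm_num
    field_simp
    ring
  · rw [aa_odd, show 2 * m + 1 + 1 = 2 * (m + 1) by ring, aa_even, pow_succ (-1 : ℝ) (2 * m), pow_mul]
    norm_num

lemma first_term (n : ℕ) (hn : 2 ≤ n) :
    |aa (n / 2) * aa n - 2 * √2 / π / n| ≤ 4 / (n : ℝ) ^ 2 := by
  have hp := Real.pi_gt_three
  obtain ⟨h1, h2⟩ := aa_bounds n
  obtain ⟨h3, h4⟩ := aa_bounds (n / 2)
  have hN1 : ((n / 2 : ℕ) : ℝ) * 2 ≤ n := by exact_mod_cast Nat.div_mul_le_self n 2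
  have hN2 : (n : ℝ) ≤ ((n / 2 : ℕ) : ℝ) * 2 + 1 := by
    have : n ≤ n / 2 * 2 + 1 := by omega
    exact_mod_cast this
  have hn' : (2 : ℝ) ≤ n := by exact_mod_cast hn
  have ha := aa_nonneg n
  have hb := aa_nonneg (n / 2)
  set N : ℝ := ((n / 2 : ℕ) : ℝ)
  set a := aa n
  set b := aa (n / 2)
  clear_value N a b
  generalize (n : ℝ) = x at *
  set q := 2 * √2 / π with hq
  have hq0 : 0 < q := by positivity
  have hqq : (π * q) ^ 2 = 8 := by
    rw [hq]; field_simp; norm_num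
  have hq1 : q ≤ 1 := by
    have : (3 * q) ^ 2 ≤ 8 := by rw [← hqq]; gcongr
    nlinarith
  have hP : 0 ≤ b * a := by positivity
  -- upper
  have u : (b * a) * (x - 1) ≤ q := by
    have e : (π * ((b * a) * (x - 1))) ^ 2 ≤ (π * q) ^ 2 := by
      rw [hqq]
      have i1 : π * (x - 1) * b ^ 2 ≤ 4 := by
        have : π * (x - 1) * b ^ 2 ≤ π * (N * 2) * b ^ 2 := by gcongr; linarith
        linarith
      have i2 : π * (x - 1) * a ^ 2 ≤ 2 := by
        have : π * (x - 1) * a ^ 2 ≤ π * x * a ^ 2 := by gcongr; linarith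
        linarith
      have i3 : 0 ≤ π * (x - 1) * a ^ 2 := by
        have : 0 ≤ x - 1 := by linarith
        positivity
      calc _ = (π * (x - 1) * b ^ 2) * (π * (x - 1) * a ^ 2) := by ring
        _ ≤ 4 * 2 := by gcongr
        _ = 8 := by norm_num
    have := (le_abs_self _).trans (abs_le_of_sq_le_sq e (by first | positivity | (have : 0 ≤ x + 4 := (by linarith); positivity)))
    exact le_of_mul_le_mul_left this (by positivity)
  have l : q ≤ (b * a) * (x + 4) := by
    have e : (π * q) ^ 2 ≤ (π * ((b * a) * (x + 4))) ^ 2 := by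
      rw [hqq]
      have i1 : 4 ≤ π * (x + 4) * b ^ 2 := by
        have : π * (N * 2 + 4) * b ^ 2 ≤ π * (x + 4) * b ^ 2 := by gcongr
        linarith
      have i2 : 2 ≤ π * (x + 4) * a ^ 2 := by
        have : π * (x + 2) * a ^ 2 ≤ π * (x + 4) * a ^ 2 := by gcongr; norm_num
        linarith
      calc (8 : ℝ) = 4 * 2 := by norm_num
        _ ≤ (π * (x + 4) * b ^ 2) * (π * (x + 4) * a ^ 2) := by gcongr
        _ = _ := by ring
    have := (le_abs_self _).trans (abs_le_of_sq_le_sq e (by first | positivity | (have : 0 ≤ x + 4 := (by linarith); positivity)))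
    exact le_of_mul_le_mul_left this (by positivity)
  have hx : 0 < x := by linarith
  have hPx : (b * a) * x ≤ 2 := by nlinarith
  have hPx2 : (b * a) * x - q ≤ 4 / x := by
    rw [le_div_iff₀ hx]; nlinarith
  have hPx3 : -(4 / x) ≤ (b * a) * x - q := by
    rw [neg_le, le_div_iff₀ hx]
    have : q * x ≤ b * a * (x + 4) * x := by gcongr
    have h5 : b * a * x * x + 4 * q ≥ q * x := by nlinarith
    nlinarith
  rw [show b * a - q / x = (b * a * x - q) / x by field_simp,
    show 4 / x ^ 2 = (4 / x) / x by field_simp, abs_div, abs_of_pos hx]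
  gcongr
  exact abs_le.2 ⟨hPx3, hPx2⟩

lemma pascal_sum (n : ℕ) (f : ℕ → ℝ) : ∑ k ∈ range (n + 2), ((n + 1).choose k : ℝ) * f k =
    ∑ k ∈ range (n + 1), (n.choose k : ℝ) * (f k + f (k + 1)) := by
  rw [sum_range_succ']
  simp only [Nat.choose_succ_succ', mul_add, sum_add_distrib, Nat.cast_add, add_mul]
  have : ∑ k ∈ range (n + 1), (n.choose k : ℝ) * f k =
      ∑ k ∈ range (n + 2), (n.choose k : ℝ) * f k := by
    rw [sum_range_succ _ (n + 1)]; simp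
  rw [this, sum_range_succ' _ (n + 1)]
  simp only [Nat.choose_zero_right]; ring

lemma moment (n : ℕ) : ∀ c : ℝ, ∑ k ∈ range (n + 1), (n.choose k : ℝ) * (c - 2 * k) ^ 2 =
    2 ^ n * ((c - n) ^ 2 + n) := by
  induction n with
  | zero => intro c; simp
  | succ n ih =>
    intro c
    rw [pascal_sum]
    simp only [mul_add, sum_add_distrib]
    have := ih (c - 2)
    have e : ∀ k : ℕ, c - 2 * ((k + 1 : ℕ) : ℝ) = c - 2 - 2 * k := by intro k; push_cast; ring
    simp only [e]
    rw [ih, this]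
    push_cast
    ring

lemma moment1 (n N : ℕ) (hN : N ≤ n + 1) :
    ∑ k ∈ range N, (n.choose k : ℝ) * ((n : ℝ) - 2 * k) ^ 2 ≤ (2 : ℝ) ^ n * n := by
  have := moment n n
  calc _ ≤ ∑ k ∈ range (n + 1), (n.choose k : ℝ) * ((n : ℝ) - 2 * k) ^ 2 := by
        apply sum_le_sum_of_subset_of_nonneg
        · simpa using hN
        · intros; positivity
    _ = _ := by rw [this]; ring

lemma moment0 (n N : ℕ) (hN : N ≤ n + 1) :
    ∑ k ∈ range N, (n.choose k : ℝ) ≤ 2 ^ n := by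
  calc _ ≤ ∑ k ∈ range (n + 1), (n.choose k : ℝ) := by
        apply sum_le_sum_of_subset_of_nonneg
        · simpa using hN
        · intros; positivity
    _ = _ := by exact_mod_cast Nat.sum_range_choose n

lemma moment2 (n N : ℕ) (hN : N ≤ n + 1) :
    ∑ k ∈ range N, (n.choose k : ℝ) * (((n : ℝ) - 2 * k) ^ 2 / (k + 1)) ≤ (2 : ℝ) ^ n * 4 := by
  have h := moment (n + 1) (n + 2)
  rw [sum_range_succ'] at h
  calc _ ≤ ∑ k ∈ range (n + 1), (n.choose k : ℝ) * (((n : ℝ) - 2 * k) ^ 2 / (k + 1)) := by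
        apply sum_le_sum_of_subset_of_nonneg
        · simpa using hN
        · intros; positivity
    _ = (∑ k ∈ range (n + 1), ((n + 1).choose (k + 1) : ℝ) *
          ((n : ℝ) + 2 - 2 * ((k + 1 : ℕ) : ℝ)) ^ 2) / ((n : ℝ) + 1) := by
        rw [sum_div]
        refine sum_congr rfl fun k _ => ?_
        have h2 : ((n : ℝ) + 1) * n.choose k = (n + 1).choose (k + 1) * (k + 1) := by
          exact_mod_cast Nat.add_one_mul_choose_eq n k
        have h3 : (n.choose k : ℝ) = (n + 1).choose (k + 1) * (k + 1) / (n + 1) := by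
          field_simp; linarith
        rw [h3]; push_cast; field_simp; ring
    _ ≤ (2 ^ (n + 1) * (((n : ℝ) + 2 - (n + 1 : ℕ)) ^ 2 + (n + 1 : ℕ))) / ((n : ℝ) + 1) := by
        gcongr
        rw [← h]
        have : 0 ≤ ((n + 1).choose 0 : ℝ) * ((n : ℝ) + 2 - 2 * ((0 : ℕ) : ℝ)) ^ 2 := by positivity
        linarith
    _ ≤ 2 ^ n * 4 := by
        rw [div_le_iff₀ (by positivity), pow_succ]
        push_cast
        have : (0 : ℝ) < 2 ^ n := by positivity
        have hn : (0 : ℝ) ≤ n := by positivity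
        nlinarith [mul_nonneg this.le hn]

lemma alt_sum (n N : ℕ) : ∑ k ∈ range (N + 1), (-1 : ℝ) ^ k * ((n + 1).choose k : ℝ) =
    (-1) ^ N * n.choose N := by
  induction N with
  | zero => simp
  | succ N ih => rw [sum_range_succ, ih, Nat.choose_succ_succ']; push_cast; ring

lemma plain_sum (n N : ℕ) : ∑ k ∈ range (N + 1), ((n + 1).choose k : ℝ) =
    2 * ∑ k ∈ range (N + 1), (n.choose k : ℝ) - n.choose N := by
  induction N with
  | zero => simp; norm_num
  | succ N ih => rw [sum_range_succ, ih, sum_range_succ _ (N + 1), Nat.choose_succ_succ']; push_cast; ring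

lemma half_sum (n : ℕ) (hn : 2 ≤ n) :
    |∑ k ∈ range (n / 2), (n.choose k : ℝ) - 2 ^ n / 2| ≤ n.choose (n / 2) := by
  have hw : ∀ m : ℕ, ∑ k ∈ range (m + 1), ((2 * m + 1).choose k : ℝ) = 4 ^ m := by
    intro m; exact_mod_cast Nat.sum_range_choose_halfway m
  rcases Nat.even_or_odd' n with ⟨m, rfl | rfl⟩
  · obtain ⟨M, rfl⟩ : ∃ M, m = M + 1 := ⟨m - 1, by omega⟩
    have e : 2 * (M + 1) / 2 = M + 1 := by omega
    have := plain_sum (2 * M + 1) M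
    rw [e, show 2 * (M + 1) = 2 * M + 1 + 1 by ring, this, hw, pow_succ, pow_succ, pow_mul]
    have h4 : ((2 : ℝ) ^ 2) ^ M = 4 ^ M := by norm_num
    rw [h4, Nat.choose_succ_succ', abs_le]
    push_cast
    have : (0 : ℝ) ≤ (2 * M + 1).choose M := by positivity
    have : (0 : ℝ) ≤ (2 * M + 1).choose (M + 1) := by positivity
    constructor <;> linarith
  · have e : (2 * m + 1) / 2 = m := by omega
    have := hw m
    rw [sum_range_succ] at this
    have h5 : ∑ k ∈ range m, ((2 * m + 1).choose k : ℝ) = 4 ^ m - (2 * m + 1).choose m := by linarith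
    rw [e, h5, pow_succ, pow_mul]
    have h4 : ((2 : ℝ) ^ 2) ^ m = 4 ^ m := by norm_num
    rw [h4, abs_le]
    have : (0 : ℝ) ≤ (2 * m + 1).choose m := by positivity
    constructor <;> linarith

lemma half_alt (n : ℕ) (hn : 2 ≤ n) :
    |∑ k ∈ range (n / 2), (-1 : ℝ) ^ k * (n.choose k : ℝ)| ≤ n.choose (n / 2) := by
  obtain ⟨m, rfl⟩ : ∃ m, n = m + 1 := ⟨n - 1, by omega⟩
  obtain ⟨M, hM⟩ : ∃ M, (m + 1) / 2 = M + 1 := ⟨(m + 1) / 2 - 1, by omega⟩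
  rw [hM, alt_sum, abs_mul, abs_pow, abs_neg, abs_one, one_pow, one_mul, Nat.choose_succ_succ',
    Nat.abs_cast]
  push_cast
  have : (0 : ℝ) ≤ m.choose (M + 1) := by positivity
  linarith

lemma EE (n : ℕ) (hn : 2 ≤ n) :
    |∑ k ∈ range (n / 2), ((1 + (-1 : ℝ) ^ k) / 2) * (n.choose k / 2 ^ n) - 1 / 4| ≤ aa n := by
  have h1 := half_sum n hn
  have h2 := half_alt n hn
  have h3 : ∑ k ∈ range (n / 2), ((1 + (-1 : ℝ) ^ k) / 2) * (n.choose k / 2 ^ n) - 1 / 4 =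
      ((∑ k ∈ range (n / 2), (n.choose k : ℝ) - 2 ^ n / 2) +
        ∑ k ∈ range (n / 2), (-1 : ℝ) ^ k * (n.choose k : ℝ)) / (2 * 2 ^ n) := by
    have : ∀ k, ((1 + (-1 : ℝ) ^ k) / 2) * ((n.choose k : ℝ) / 2 ^ n) =
      ((n.choose k : ℝ) + (-1 : ℝ) ^ k * (n.choose k : ℝ)) / (2 * 2 ^ n) := by
      intro k; field_simp
    simp only [this]
    rw [← sum_div, sum_add_distrib]
    field_simp
    ring
  rw [h3, abs_div, abs_of_pos (show (0 : ℝ) < 2 * 2 ^ n by positivity), aa,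
    div_le_div_iff₀ (by positivity) (by positivity)]
  have := (abs_add_le _ _).trans (add_le_add h1 h2)
  have h4 : (0 : ℝ) < 2 ^ n := by positivity
  nlinarith

lemma pointwise (n k : ℕ) (β : ℝ) (hn : 1 ≤ n) (hk : 2 * k ≤ n) (hβ0 : 0 < β)
    (hβ : π * (n : ℝ) ^ 3 * β ^ 2 = 16) :
    |aa k / (k + 2) - β| ≤ 10000 * (1 / (n : ℝ) ^ 2 + ((n : ℝ) - 2 * k) ^ 2 / (n : ℝ) ^ 3 +
      ((n : ℝ) - 2 * k) ^ 2 / (k + 1) / (n : ℝ) ^ 2) := by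
  have hp := Real.pi_gt_three
  have hn' : (1 : ℝ) ≤ n := by exact_mod_cast hn
  have hk' : 2 * (k : ℝ) ≤ n := by exact_mod_cast hk
  have hk0 : (0 : ℝ) ≤ k := by positivity
  obtain ⟨h1, h2⟩ := aa_bounds k
  have ha := aa_nonneg k
  have ha1 := aa_le_one k
  generalize aa k = a at *
  generalize (k : ℝ) = y at *
  generalize (n : ℝ) = z at *
  have hz : 0 < z := by linarith
  have hβz : β ≤ 4 / z := by
    rw [le_div_iff₀ hz]
    have : (β * z) ^ 2 ≤ 16 := by
      have i1 : 1 * (β * z) ^ 2 ≤ (π * z) * (β * z) ^ 2 := by gcongr; nlinarith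
      nlinarith
    nlinarith
  rcases le_or_gt (z / 4) y with hy | hy
  · have hy0 : 0 < y := by linarith
    set g := a / (y + 2) with hg
    have hg0 : 0 ≤ g := by positivity
    have hag : a = g * (y + 2) := by rw [hg]; field_simp
    set x := z - 2 * y with hx
    have hx0 : 0 ≤ x := by linarith
    have G1 : 2 ≤ π * (y + 2) ^ 3 * g ^ 2 := by rw [hag] at h1; linarith
    have G2 : π * y ^ 3 * g ^ 2 ≤ 2 := by
      rw [hag] at h2
      have : π * y ^ 3 * g ^ 2 ≤ π * y * (g * (y + 2)) ^ 2 := by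
        have : π * y * (g * y) ^ 2 ≤ π * y * (g * (y + 2)) ^ 2 := by gcongr; linarith
        linarith
      linarith
    -- main comparison
    have key : |g - β| ≤ 1000 * (β * (x + 1) / z) := by
      have d1 : π * (g ^ 2 - β ^ 2) * z ^ 4 ≤ 16000 * (x + 1) := by
        have A : π * g ^ 2 * z ^ 3 ≤ 128 := by
          have : π * g ^ 2 * z ^ 3 ≤ π * g ^ 2 * (4 * y) ^ 3 := by gcongr; linarith
          linarith
        have e1 : π * (g ^ 2 - β ^ 2) * z ^ 3 ≤ π * g ^ 2 * (z ^ 3 - (2 * y) ^ 3) := by linarith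
        have e2 : z ^ 3 - (2 * y) ^ 3 ≤ 3 * z ^ 2 * x := by
          have : z ^ 3 - (2 * y) ^ 3 = x * (z ^ 2 + z * (2 * y) + (2 * y) ^ 2) := by rw [hx]; ring
          rw [this]
          have : (z ^ 2 + z * (2 * y) + (2 * y) ^ 2) ≤ 3 * z ^ 2 := by nlinarith
          nlinarith
        have e3 : π * g ^ 2 * (z ^ 3 - (2 * y) ^ 3) ≤ π * g ^ 2 * (3 * z ^ 2 * x) := by gcongr
        calc π * (g ^ 2 - β ^ 2) * z ^ 4 = π * (g ^ 2 - β ^ 2) * z ^ 3 * z := by ring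
          _ ≤ π * g ^ 2 * (3 * z ^ 2 * x) * z := mul_le_mul_of_nonneg_right (by linarith) hz.le
          _ = (π * g ^ 2 * z ^ 3) * (3 * x) := by ring
          _ ≤ 128 * (3 * x) := by gcongr
          _ ≤ _ := by linarith
      have d2 : π * (β ^ 2 - g ^ 2) * z ^ 4 ≤ 16000 * (x + 1) := by
        have e1 : π * (β ^ 2 - g ^ 2) * (y + 2) ^ 3 ≤ π * β ^ 2 * ((y + 2) ^ 3 - (z / 2) ^ 3) := by
          linarith
        have e2 : (y + 2) ^ 3 - (z / 2) ^ 3 ≤ 124 / 8 * z ^ 2 := by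
          have : (y + 2) ^ 3 ≤ (z / 2 + 2) ^ 3 := by gcongr; linarith
          nlinarith
        rcases le_or_gt (β ^ 2 - g ^ 2) 0 with hs | hs
        · have : π * (β ^ 2 - g ^ 2) * z ^ 4 ≤ 0 := by
            apply mul_nonpos_of_nonpos_of_nonneg _ (by positivity)
            apply mul_nonpos_of_nonneg_of_nonpos (by positivity) hs
          linarith
        · have e3 : π * (β ^ 2 - g ^ 2) * z ^ 3 ≤ 64 * (π * (β ^ 2 - g ^ 2) * (y + 2) ^ 3) := by
            have : π * (β ^ 2 - g ^ 2) * z ^ 3 ≤ π * (β ^ 2 - g ^ 2) * (4 * (y + 2)) ^ 3 := by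
              gcongr; linarith
            linarith
          have e4 : π * β ^ 2 * ((y + 2) ^ 3 - (z / 2) ^ 3) ≤ π * β ^ 2 * (124 / 8 * z ^ 2) := by
            gcongr
          calc π * (β ^ 2 - g ^ 2) * z ^ 4 = π * (β ^ 2 - g ^ 2) * z ^ 3 * z := by ring
            _ ≤ 64 * (π * β ^ 2 * (124 / 8 * z ^ 2)) * z := mul_le_mul_of_nonneg_right (by linarith) hz.le
            _ = 992 * (π * z ^ 3 * β ^ 2) := by ring
            _ ≤ _ := by rw [hβ]; linarith
      have d3 : π * |g ^ 2 - β ^ 2| * z ^ 4 ≤ 16000 * (x + 1) := by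
        rcases abs_cases (g ^ 2 - β ^ 2) with ⟨h, _⟩ | ⟨h, _⟩ <;> rw [h]
        · exact d1
        · rw [neg_sub]; exact d2
      have d4 : |g - β| * β ≤ |g ^ 2 - β ^ 2| := by
        rw [show g ^ 2 - β ^ 2 = (g - β) * (g + β) by ring, abs_mul,
          abs_of_nonneg (show 0 ≤ g + β by linarith)]
        gcongr; linarith
      have d5 : |g - β| * (π * z ^ 3 * β ^ 2) * z ≤ β * (16000 * (x + 1)) := by
        calc _ = β * (π * (|g - β| * β) * z ^ 4) := by ring
          _ ≤ β * (π * |g ^ 2 - β ^ 2| * z ^ 4) := by gcongr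
          _ ≤ _ := by gcongr
      rw [hβ] at d5
      rw [mul_div_assoc', le_div_iff₀ hz]
      linarith
    have am : β * x / z ≤ 3 / z ^ 2 + x ^ 2 / z ^ 3 := by
      rw [← sub_nonneg]
      have : 3 / z ^ 2 + x ^ 2 / z ^ 3 - β * x / z = (3 * z + x ^ 2 - β * x * z ^ 2) / z ^ 3 := by
        field_simp
      rw [this]
      apply div_nonneg _ (by positivity)
      have i2 : (β * z ^ 2) ^ 2 ≤ 16 / 3 * z := by
        have : 3 * (β * z ^ 2) ^ 2 ≤ π * (β * z ^ 2) ^ 2 := by gcongr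
        have e : π * (β * z ^ 2) ^ 2 = 16 * z := by rw [← hβ]; ring
        linarith
      nlinarith [sq_nonneg (β * z ^ 2 - 2 * x)]
    have b1 : β / z ≤ 4 / z ^ 2 := by
      rw [show 4 / z ^ 2 = 4 / z / z by field_simp]; gcongr
    have c3 : 0 ≤ x ^ 2 / (y + 1) / z ^ 2 := by positivity
    have c2 : 0 ≤ x ^ 2 / z ^ 3 := by positivity
    have c4 : β * (x + 1) / z = β * x / z + β / z := by ring
    have c5 : 3 / z ^ 2 = 3 * (1 / z ^ 2) := by ring
    have c6 : 4 / z ^ 2 = 4 * (1 / z ^ 2) := by ring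
    have c7 : 0 ≤ 1 / z ^ 2 := by positivity
    rw [c4] at key
    rw [c5] at am
    rw [c6] at b1
    linarith
  · have hx : z / 2 ≤ z - 2 * y := by linarith
    have hx2 : z ^ 2 / 4 ≤ (z - 2 * y) ^ 2 := by nlinarith
    generalize (z - 2 * y) ^ 2 = X at *
    have g1 : a / (y + 2) ≤ 4 * (X / (y + 1) / z ^ 2) := by
      calc a / (y + 2) ≤ 1 / (y + 1) := by gcongr; linarith
        _ = 4 * ((z ^ 2 / 4) / (y + 1) / z ^ 2) := by field_simp
        _ ≤ _ := by gcongr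
    have g2 : β ≤ 16 * (X / z ^ 3) := by
      calc β ≤ 4 / z := hβz
        _ = 16 * ((z ^ 2 / 4) / z ^ 3) := by field_simp; norm_num
        _ ≤ _ := by gcongr
    have g0 : 0 ≤ a / (y + 2) := by positivity
    have c7 : 0 ≤ 1 / z ^ 2 := by positivity
    rw [abs_le]
    constructor <;> linarith

lemma second_term (n : ℕ) (β : ℝ) (hn : 2 ≤ n) (hβ0 : 0 < β)
    (hβ : π * (n : ℝ) ^ 3 * β ^ 2 = 16) :
    |∑ k ∈ range (n / 2), (aa k - aa (k + 1)) * (n.choose k / 2 ^ n) - β / 4| ≤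
      60002 / (n : ℝ) ^ 2 := by
  have hp := Real.pi_gt_three
  have hn' : (2 : ℝ) ≤ n := by exact_mod_cast hn
  have hz : (0 : ℝ) < n := by linarith
  set E := ∑ k ∈ range (n / 2), ((1 + (-1 : ℝ) ^ k) / 2) * (n.choose k / 2 ^ n) with hE
  have h1 : |∑ k ∈ range (n / 2), (aa k - aa (k + 1)) * (n.choose k / 2 ^ n) - β * E| ≤
      60000 / (n : ℝ) ^ 2 := by
    rw [hE, mul_sum, ← sum_sub_distrib]
    refine (abs_sum_le_sum_abs _ _).trans ?_
    calc _ ≤ ∑ k ∈ range (n / 2), 10000 * (1 / (n : ℝ) ^ 2 + ((n : ℝ) - 2 * k) ^ 2 / (n : ℝ) ^ 3 +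
      ((n : ℝ) - 2 * k) ^ 2 / (k + 1) / (n : ℝ) ^ 2) * (n.choose k / 2 ^ n) := by
          refine sum_le_sum fun k hk => ?_
          have hk' : 2 * k ≤ n := by simp at hk; omega
          have hpt := pointwise n k β (by omega) hk' hβ0 hβ
          rw [aa_diff, show aa k / (k + 2) * ((1 + (-1 : ℝ) ^ k) / 2) * ((n.choose k : ℝ) / 2 ^ n) -
            β * ((1 + (-1 : ℝ) ^ k) / 2 * ((n.choose k : ℝ) / 2 ^ n)) =
            (aa k / (k + 2) - β) * ((1 + (-1 : ℝ) ^ k) / 2) * ((n.choose k : ℝ) / 2 ^ n) by ring,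
            abs_mul, abs_mul, abs_of_nonneg (show 0 ≤ (n.choose k : ℝ) / 2 ^ n by positivity)]
          have hs : |(1 + (-1 : ℝ) ^ k) / 2| ≤ 1 := by
            rcases neg_one_pow_eq_or ℝ k with h | h <;> rw [h] <;> norm_num
          refine mul_le_mul_of_nonneg_right ?_ (by positivity)
          calc _ ≤ |aa k / (k + 2) - β| * 1 := mul_le_mul_of_nonneg_left hs (abs_nonneg _)
            _ ≤ _ := by rw [mul_one]; exact hpt
      _ = 10000 / 2 ^ n * ((∑ k ∈ range (n / 2), (n.choose k : ℝ)) / (n : ℝ) ^ 2 +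
          (∑ k ∈ range (n / 2), (n.choose k : ℝ) * ((n : ℝ) - 2 * k) ^ 2) / (n : ℝ) ^ 3 +
          (∑ k ∈ range (n / 2), (n.choose k : ℝ) * (((n : ℝ) - 2 * k) ^ 2 / (k + 1))) / (n : ℝ) ^ 2) := by
          rw [sum_div, sum_div, sum_div, ← sum_add_distrib, ← sum_add_distrib, mul_sum]
          refine sum_congr rfl fun k _ => ?_
          ring
      _ ≤ 10000 / 2 ^ n * (2 ^ n / (n : ℝ) ^ 2 + 2 ^ n * n / (n : ℝ) ^ 3 + 2 ^ n * 4 / (n : ℝ) ^ 2) := by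
          gcongr
          · exact moment0 n _ (by omega)
          · exact moment1 n _ (by omega)
          · exact moment2 n _ (by omega)
      _ = _ := by field_simp; norm_num
  have h2 : |β * E - β / 4| ≤ 2 / (n : ℝ) ^ 2 := by
    rw [show β * E - β / 4 = β * (E - 1 / 4) by ring, abs_mul, abs_of_pos hβ0]
    have h3 := EE n hn
    calc _ ≤ β * aa n := by gcongr
      _ ≤ _ := by
        obtain ⟨_, h4⟩ := aa_bounds n
        have ha := aa_nonneg n
        rw [le_div_iff₀ (by positivity)]
        have : (β * aa n * (n : ℝ) ^ 2) ^ 2 ≤ 2 ^ 2 := by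
          have e : π ^ 2 * (β * aa n * (n : ℝ) ^ 2) ^ 2 =
            (π * (n : ℝ) ^ 3 * β ^ 2) * (π * n * aa n ^ 2) := by ring
          rw [hβ] at e
          have : 3 ^ 2 * (β * aa n * (n : ℝ) ^ 2) ^ 2 ≤ π ^ 2 * (β * aa n * (n : ℝ) ^ 2) ^ 2 := by
            gcongr
          linarith
        exact (le_abs_self _).trans (abs_le_of_sq_le_sq this (by norm_num))
  have := abs_sub_le (∑ k ∈ range (n / 2), (aa k - aa (k + 1)) * (n.choose k / 2 ^ n)) (β * E) (β / 4)
  have e : (60002 : ℝ) / (n : ℝ) ^ 2 = 60000 / (n : ℝ) ^ 2 + 2 / (n : ℝ) ^ 2 := by ring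
  linarith

lemma main_bound (n : ℕ) (hn : 2 ≤ n) :
    |walkWeight 2 SS ww n - 4 ^ n / n * (2 * Real.sqrt 2 / π + (n : ℝ) ^ (-(1 : ℝ) / 2) / Real.sqrt π)|
      ≤ 60006 * 4 ^ n / (n : ℝ) ^ 2 := by
  have hz : (0 : ℝ) < n := by
    have : 0 < n := by omega
    exact_mod_cast this
  have hp := Real.pi_pos
  set r := (n : ℝ) ^ (-(1 : ℝ) / 2) with hr
  have hr0 : 0 < r := Real.rpow_pos_of_pos hz _
  have hrr : r ^ 2 * n = 1 := by
    rw [hr, ← Real.rpow_natCast, ← Real.rpow_mul hz.le]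
    norm_num
    rw [Real.rpow_neg_one]
    field_simp
  have h1 := first_term n hn
  have hs : √π ^ 2 = π := Real.sq_sqrt hp.le
  have h2 := second_term n (4 * r / (n * √π)) hn (by positivity) (by
    rw [div_pow, mul_pow, mul_pow, hs]
    field_simp
    linarith)
  rw [walk_eq, show (4 : ℝ) ^ n / n * (2 * √2 / π + r / √π) =
    4 ^ n * (2 * √2 / π / n + 4 * r / (n * √π) / 4) by field_simp, ← mul_sub, abs_mul,
    abs_of_pos (show (0 : ℝ) < 4 ^ n by positivity),
    show 60006 * (4 : ℝ) ^ n / (n : ℝ) ^ 2 = 4 ^ n * (4 / (n : ℝ) ^ 2 + 60002 / (n : ℝ) ^ 2) by ring,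
    add_sub_add_comm]
  gcongr
  exact (abs_add_le _ _).trans (add_le_add h1 h2)

/-- For the weighted step set `{(0,1), (1,-1), (-1,-1)}` in `ℤ²` with the step `(0,1)`
of weight `2`, the total weight of quarter-plane walks satisfies
`s_n = (4^n/n)(2√2/π + n^{-1/2}/√π + O(1/n))`; in particular `s_n ∼ (2√2/π)·4^n/n`. -/
theorem weighted_zero_drift_example_asymptotics :
    (∃ C : ℝ, ∀ᶠ n : ℕ in atTop,
      |walkWeight 2 ({![0, 1], ![1, -1], ![-1, -1]} : Finset (Fin 2 → ℤ))
          (fun i => if i = ![0, 1] then 2 else 1) n -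
        4 ^ n / n * (2 * Real.sqrt 2 / π + (n : ℝ) ^ (-(1 : ℝ) / 2) / Real.sqrt π)|
        ≤ C * 4 ^ n / (n : ℝ) ^ 2) ∧
    Tendsto (fun n : ℕ =>
      walkWeight 2 ({![0, 1], ![1, -1], ![-1, -1]} : Finset (Fin 2 → ℤ))
          (fun i => if i = ![0, 1] then 2 else 1) n /
        ((2 * Real.sqrt 2 / π) * 4 ^ n / n))
      atTop (nhds 1) := by
  constructor
  · refine ⟨60006, ?_⟩
    filter_upwards [eventually_ge_atTop 2] with n hn
    exact main_bound n hn
  · change Tendsto (fun n : ℕ => walkWeight 2 SS ww n / ((2 * Real.sqrt 2 / π) * 4 ^ n / n))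
      atTop (nhds 1)
    set q := 2 * √2 / π with hq
    have hq0 : 0 < q := by have := Real.pi_pos; positivity
    have hlim : Tendsto (fun n : ℕ => (60006 / (n : ℝ) + (n : ℝ) ^ (-(1 : ℝ) / 2) / √π) / q)
        atTop (nhds 0) := by
      have t1 : Tendsto (fun n : ℕ => 60006 / (n : ℝ)) atTop (nhds 0) :=
        tendsto_const_div_atTop_nhds_zero_nat _
      have t2 : Tendsto (fun n : ℕ => (n : ℝ) ^ (-(1 : ℝ) / 2)) atTop (nhds 0) := by
        have := (tendsto_rpow_neg_atTop (show (0 : ℝ) < 1 / 2 by norm_num)).comp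
          (tendsto_natCast_atTop_atTop (R := ℝ))
        convert this using 2
        simp [neg_div]
      simpa using (t1.add (t2.div_const (√π))).div_const q
    rw [tendsto_iff_norm_sub_tendsto_zero]
    refine squeeze_zero' (Eventually.of_forall fun _ => norm_nonneg _) ?_ hlim
    filter_upwards [eventually_ge_atTop 2] with n hn
    have hb := main_bound n hn
    rw [← hq] at hb
    have hz : (0 : ℝ) < n := by
      have : 0 < n := by omega
      exact_mod_cast this
    have hr0 : 0 < (n : ℝ) ^ (-(1 : ℝ) / 2) := Real.rpow_pos_of_pos hz _
    generalize (n : ℝ) ^ (-(1 : ℝ) / 2) = r at *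
    have hp : 0 < √π := Real.sqrt_pos.2 Real.pi_pos
    have h4 : (0 : ℝ) < 4 ^ n := by positivity
    have e : walkWeight 2 SS ww n / (q * 4 ^ n / n) - 1 =
        ((walkWeight 2 SS ww n - 4 ^ n / n * (q + r / √π)) * (n / 4 ^ n) + r / √π) / q := by
      field_simp
      ring
    rw [Real.norm_eq_abs, e, abs_div, abs_of_pos hq0]
    gcongr
    refine (abs_add_le _ _).trans ?_
    rw [abs_of_pos (show 0 < r / √π by positivity), abs_mul,
      abs_of_pos (show (0 : ℝ) < n / 4 ^ n by positivity)]
    gcongr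
    calc _ ≤ (60006 * 4 ^ n / (n : ℝ) ^ 2) * (n / 4 ^ n) := by gcongr
      _ = _ := by field_simp

end
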